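/- Let q = p^t with p prime. A μ-fold 1-perfect code in H(n,q) exists if and only if (i) μ < (q-1)n + 1, (ii) μ·q^n/((q-1)n+1) is an integer, and (iii) n ≡ 1 (mod q). -/

import Mathlib

/-!
Let `C` be a `μ`-fold `1`-perfect code in `H(n, q)` and let `N = (q - 1) n + 1` be the size of a
ball. The function `N • 1_C - μ` is nonzero and has sum `0` over every ball, so it is an
eigenvector, with eigenvalue `n - 1`, of the sum `∑ i, J i` of the line-sum operators. As the `J i`
commute and satisfy `J i ^ 2 = q • J i`, every eigenvalue of this sum is a multiple of `q`.

Conversely, let `q = p ^ t` and `N = p ^ M * ν` with `p ∤ ν`. The hypotheses give `t ≤ M` and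
`μ = ν * s` with `s < p ^ M`. If `n` homomorphisms `h i` from `GF(q)` to `GF(p ^ M)` form a
multispread of multiplicity `ν`, then as `y` runs through a ball, the syndrome `∑ i, h i (y i)`
takes every value exactly `ν` times, so the words whose syndrome lies in a fixed set of size `s`
form the required code. Here `s` need not be a power of `p`, so no cosets have to be combined.
To build the multispread, write `n = (1 + q + ⋯ + q ^ (A - 1)) + j p ^ M` with `M ≤ A t`: project
the points of `ℙ(GF(q) ^ A)` onto `GF(p ^ M)`, and add `j` copies of the family `a ↦ c * φ a`,
where `φ` is injective and `c` runs through `GF(p ^ M)`.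
-/

open Finset Function Module
open scoped LinearAlgebra.Projectivization

section HammingUnitBall

theorem injOn_update_sigma {ι : Type*} {β : ι → Type*} [DecidableEq ι] (x : ∀ i, β i) :
    Set.InjOn (fun z : Σ i, β i ↦ update x z.1 z.2) {z | z.2 ≠ x z.1} := by
  rintro ⟨i, a⟩ (ha : a ≠ x i) ⟨j, b⟩ - (h : update x i a = update x j b)
  obtain rfl : i = j := by
    by_contra hij
    exact ha (by simpa [hij] using congrFun h i)
  rw [update_injective x i h]

variable {ι : Type*} {β : ι → Type*} [Fintype ι] [∀ i, DecidableEq (β i)]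

theorem hammingDist_eq_one_iff [DecidableEq ι] {x y : ∀ i, β i} :
    hammingDist x y = 1 ↔ ∃ i, ∃ a ≠ x i, update x i a = y := by
  simp only [hammingDist, card_eq_one, Finset.ext_iff, mem_filter_univ, mem_singleton]
  constructor
  · rintro ⟨i, hi⟩
    refine ⟨i, y i, ((hi i).2 rfl).symm, update_eq_iff.2 ⟨rfl, fun j hj ↦ ?_⟩⟩
    exact not_not.1 (mt (hi j).1 hj)
  · rintro ⟨i, a, ha, rfl⟩
    refine ⟨i, fun j ↦ ?_⟩
    obtain rfl | hj := eq_or_ne j i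
    · simpa using ha.symm
    · simp [hj]

variable [∀ i, Fintype (β i)]

/-- The ball of radius one around the word `x` in the Hamming metric. -/
def hammingUnitBall [DecidableEq ι] (x : ∀ i, β i) : Finset (∀ i, β i) := {y | hammingDist x y ≤ 1}

variable [DecidableEq ι]

@[simp]
theorem mem_hammingUnitBall {x y : ∀ i, β i} : y ∈ hammingUnitBall x ↔ hammingDist x y ≤ 1 := by
  simp [hammingUnitBall]

theorem hammingUnitBall_eq_insert (x : ∀ i, β i) :
    hammingUnitBall x =
      insert x ((univ.sigma fun i ↦ univ.erase (x i)).image fun z ↦ update x z.1 z.2) := by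
  ext y
  simp [Nat.le_one_iff_eq_zero_or_eq_one, hammingDist_eq_one_iff, eq_comm]

theorem sum_hammingUnitBall {M : Type*} [AddCommMonoid M] (f : (∀ i, β i) → M) (x : ∀ i, β i) :
    ∑ y ∈ hammingUnitBall x, f y = f x + ∑ i, ∑ a ∈ univ.erase (x i), f (update x i a) := by
  have hx : x ∉ (univ.sigma fun i ↦ univ.erase (x i)).image fun z ↦ update x z.1 z.2 := by
    simp
  rw [hammingUnitBall_eq_insert, sum_insert hx, sum_image, sum_sigma]
  exact (injOn_update_sigma x).mono fun z hz ↦ by simpa using hz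

theorem card_hammingUnitBall (x : ∀ i, β i) :
    #(hammingUnitBall x) = ∑ i, (Fintype.card (β i) - 1) + 1 := by
  rw [card_eq_sum_ones, sum_hammingUnitBall (fun _ ↦ 1)]
  simp [card_erase_of_mem, add_comm]

theorem card_hammingUnitBall_const {α : Type*} [Fintype α] [DecidableEq α] (x : ι → α) :
    #(hammingUnitBall x) = (Fintype.card α - 1) * Fintype.card ι + 1 := by
  simp [card_hammingUnitBall, mul_comm]

end HammingUnitBall

section Lloyd

theorem exists_eq_natCast_mul_of_hasEigenvector_sum {ι R M : Type*} [CommRing R] [IsDomain R]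
    [AddCommGroup M] [Module R M] [IsTorsionFree R M] {J : ι → End R M} {q l : R} {f : M}
    {s : Finset ι} (hcomm : ∀ i j, Commute (J i) (J j)) (hsq : ∀ i, J i * J i = q • J i)
    (hf : (∑ i ∈ s, J i).HasEigenvector l f) : ∃ k : ℕ, l = k * q := by
  classical
  induction s using Finset.induction_on generalizing l f with
  | empty =>
    have h0 : l • f = 0 := by simpa using hf.apply_eq_smul.symm
    exact ⟨0, by simpa using (smul_eq_zero.1 h0).resolve_right hf.2⟩
  | insert j s hj ih =>
    by_cases hjf : J j f = 0
    · refine ih (f := f) (End.hasEigenvector_iff.2 ⟨End.mem_eigenspace_iff.2 ?_, hf.2⟩)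
      simpa [sum_insert hj, hjf] using hf.apply_eq_smul
    · have hsum : (∑ i ∈ s, J i) (J j f) = (l - q) • J j f := by
        have hJ : J j * ∑ i ∈ insert j s, J i = q • J j + (∑ i ∈ s, J i) * J j := by
          rw [sum_insert hj, mul_add, hsq, (Commute.sum_right s J (J j) fun i _ ↦ hcomm j i).eq]
        have := LinearMap.congr_fun hJ f
        simp only [End.mul_apply, hf.apply_eq_smul, map_smul, LinearMap.add_apply,
          LinearMap.smul_apply] at this
        rw [sub_smul, this, add_sub_cancel_left]
      obtain ⟨k, hk⟩ := ih (End.hasEigenvector_iff.2 ⟨End.mem_eigenspace_iff.2 hsum, hjf⟩)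
      exact ⟨k + 1, by push_cast; linear_combination hk⟩

variable {ι : Type*} {β : ι → Type*} [DecidableEq ι] [∀ i, Fintype (β i)]

/-- The operator that replaces a function on words by its sums over the lines in direction `i`. -/
def lineSum (R : Type*) [CommRing R] (i : ι) : End R ((∀ i, β i) → R) where
  toFun f x := ∑ a, f (update x i a)
  map_add' f g := by ext x; simp [sum_add_distrib]
  map_smul' c f := by ext x; simp [mul_sum]

variable {R : Type*} [CommRing R]

theorem lineSum_apply (i : ι) (f : (∀ i, β i) → R) (x : ∀ i, β i) :
    lineSum R i f x = ∑ a, f (update x i a) := rfl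

theorem commute_lineSum (i j : ι) : Commute (lineSum (β := β) R i) (lineSum R j) := by
  obtain rfl | hij := eq_or_ne i j
  · rfl
  · refine LinearMap.ext fun f ↦ funext fun x ↦ ?_
    simp only [End.mul_apply, lineSum_apply]
    rw [sum_comm]
    simp only [update_comm hij]

theorem lineSum_mul_self (i : ι) :
    lineSum R i * lineSum (β := β) R i = (Fintype.card (β i) : R) • lineSum R i := by
  refine LinearMap.ext fun f ↦ funext fun x ↦ ?_
  simp [lineSum_apply]

theorem sum_hammingUnitBall_add [Fintype ι] [∀ i, DecidableEq (β i)] (f : (∀ i, β i) → R)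
    (x : ∀ i, β i) :
    ∑ y ∈ hammingUnitBall x, f y + Fintype.card ι * f x = f x + (∑ i, lineSum R i) f x := by
  have herase : ∀ i, ∑ a ∈ univ.erase (x i), f (update x i a) = lineSum R i f x - f x := fun i ↦ by
    rw [sum_erase_eq_sub (mem_univ _), update_eq_self, lineSum_apply]
  rw [sum_hammingUnitBall, sum_congr rfl fun i _ ↦ herase i, sum_sub_distrib]
  simp only [sum_const, card_univ, nsmul_eq_mul, LinearMap.sum_apply, Finset.sum_apply]
  ring

theorem card_modEq_one_of_sum_hammingUnitBall_eq_zero {ι α R : Type*} [Fintype ι] [DecidableEq ι]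
    [Fintype α] [DecidableEq α] [CommRing R] [IsDomain R] [CharZero R] {f : (ι → α) → R}
    (hf : f ≠ 0) (hsum : ∀ x, ∑ y ∈ hammingUnitBall x, f y = 0) :
    Fintype.card ι ≡ 1 [MOD Fintype.card α] := by
  have heig : (∑ i, lineSum R i).HasEigenvector ((Fintype.card ι : R) - 1) f := by
    refine End.hasEigenvector_iff.2 ⟨End.mem_eigenspace_iff.2 (funext fun x ↦ ?_), hf⟩
    have := sum_hammingUnitBall_add f x
    rw [hsum, zero_add] at this
    rw [Pi.smul_apply, smul_eq_mul, sub_one_mul, this, add_sub_cancel_left]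
  obtain ⟨k, hk⟩ :=
    exists_eq_natCast_mul_of_hasEigenvector_sum commute_lineSum lineSum_mul_self heig
  have hcard : Fintype.card ι = 1 + k * Fintype.card α := by
    rw [sub_eq_iff_eq_add'] at hk
    exact_mod_cast hk
  simp [hcard, Nat.ModEq]

end Lloyd

section PerfectCode

variable {ι α : Type*} [Fintype ι] [DecidableEq α]

/-- A `μ`-fold `1`-perfect code over the alphabet `α` with coordinates indexed by `ι`: a nonempty
proper set of words that meets every ball of radius one in exactly `μ` words. -/
structure IsMultifoldPerfect (μ : ℕ) (C : Set (ι → α)) : Prop where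
  nonempty : C.Nonempty
  ne_univ : C ≠ Set.univ
  card_ball : ∀ x, Nat.card {y // y ∈ C ∧ hammingDist x y ≤ 1} = μ

theorem card_mem_hammingDist_le_one [DecidableEq ι] [Fintype α] (C : Set (ι → α))
    [DecidablePred (· ∈ C)] (x : ι → α) :
    Nat.card {y // y ∈ C ∧ hammingDist x y ≤ 1} = #{y ∈ hammingUnitBall x | y ∈ C} := by
  rw [Nat.card_eq_fintype_card, Fintype.card_subtype]
  congr 1
  ext y
  simp [and_comm]

theorem isMultifoldPerfect_of_card_ball [Fintype α] [Nonempty (ι → α)] {μ : ℕ} {C : Set (ι → α)}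
    (hμ : 0 < μ) (hlt : μ < (Fintype.card α - 1) * Fintype.card ι + 1)
    (hC : ∀ x, Nat.card {y // y ∈ C ∧ hammingDist x y ≤ 1} = μ) : IsMultifoldPerfect μ C := by
  classical
  obtain ⟨x⟩ := ‹Nonempty (ι → α)›
  have hx := hC x
  rw [card_mem_hammingDist_le_one] at hx
  refine ⟨?_, ?_, hC⟩
  · obtain ⟨y, hy⟩ := card_pos.1 (hx ▸ hμ)
    exact ⟨y, (mem_filter.1 hy).2⟩
  · rintro rfl
    simp only [Set.mem_univ, filter_true, card_hammingUnitBall_const] at hx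
    exact hlt.ne' hx

namespace IsMultifoldPerfect

variable {μ : ℕ} {C : Set (ι → α)}

theorem comp_equiv {α' : Type*} [DecidableEq α'] (hC : IsMultifoldPerfect μ C)
    (e : α' ≃ α) : IsMultifoldPerfect μ ((fun y : ι → α' ↦ e ∘ y) ⁻¹' C) := by
  have hsurj : Surjective fun y : ι → α' ↦ e ∘ y := e.surjective.comp_left
  refine ⟨hC.nonempty.preimage hsurj, fun h ↦ hC.ne_univ ?_, fun x ↦ ?_⟩
  · exact hsurj.preimage_injective (h.trans Set.preimage_univ.symm)
  · rw [← hC.card_ball (e ∘ x)]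
    refine Nat.card_congr ((Equiv.arrowCongr (.refl ι) e).subtypeEquiv fun y ↦ ?_)
    exact and_congr_right fun _ ↦ by
      rw [← hammingDist_comp (fun _ ↦ e) fun _ ↦ e.injective]; rfl

variable [Fintype α]

theorem lt_card_hammingUnitBall (hC : IsMultifoldPerfect μ C) :
    μ < (Fintype.card α - 1) * Fintype.card ι + 1 := by
  classical
  obtain ⟨z, hz⟩ := (Set.ne_univ_iff_exists_notMem C).1 hC.ne_univ
  rw [← hC.card_ball z, card_mem_hammingDist_le_one, ← card_hammingUnitBall_const z]
  exact card_lt_card (filter_ssubset.2 ⟨z, by simp, hz⟩)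

theorem card_pow_mul_eq (hC : IsMultifoldPerfect μ C) :
    Fintype.card α ^ Fintype.card ι * μ =
      Nat.card C * ((Fintype.card α - 1) * Fintype.card ι + 1) := by
  classical
  have hcount := card_mul_eq_card_mul (s := (univ : Finset (ι → α))) (t := C.toFinset)
    (m := μ) (n := (Fintype.card α - 1) * Fintype.card ι + 1) (fun x y ↦ hammingDist x y ≤ 1)
    (fun x _ ↦ ?_) fun y _ ↦ ?_
  · rwa [card_univ, Fintype.card_fun, Set.toFinset_card,
      ← Nat.card_eq_fintype_card (α := C)] at hcount
  · rw [← hC.card_ball x, card_mem_hammingDist_le_one]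
    congr 1
    ext y
    simp [mem_bipartiteAbove, and_comm]
  · rw [← card_hammingUnitBall_const y]
    congr 1
    ext x
    simp [mem_bipartiteBelow, hammingDist_comm x y]

theorem card_hammingUnitBall_dvd (hC : IsMultifoldPerfect μ C) :
    (Fintype.card α - 1) * Fintype.card ι + 1 ∣ μ * Fintype.card α ^ Fintype.card ι :=
  ⟨Nat.card C, by rw [mul_comm μ, hC.card_pow_mul_eq, mul_comm]⟩

theorem card_modEq_one (hC : IsMultifoldPerfect μ C) :
    Fintype.card ι ≡ 1 [MOD Fintype.card α] := by
  classical
  set N := (Fintype.card α - 1) * Fintype.card ι + 1 with hN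
  let f : (ι → α) → ℤ := fun y ↦ N * (if y ∈ C then 1 else 0) - μ
  refine card_modEq_one_of_sum_hammingUnitBall_eq_zero (f := f) (fun hf ↦ ?_) fun x ↦ ?_
  · obtain ⟨w, hw⟩ := hC.nonempty
    obtain ⟨z, hz⟩ := (Set.ne_univ_iff_exists_notMem C).1 hC.ne_univ
    have hNμ : (N : ℤ) = μ := by simpa [f, hw, sub_eq_zero] using congrFun hf w
    have hμ : (μ : ℤ) = 0 := by simpa [f, hz] using congrFun hf z
    exact absurd (hNμ.trans hμ) (by positivity)
  · have hx := hC.card_ball x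
    rw [card_mem_hammingDist_le_one] at hx
    rw [sum_sub_distrib, ← mul_sum, sum_boole, hx, sum_const, card_hammingUnitBall_const, ← hN,
      nsmul_eq_mul, sub_self]

end IsMultifoldPerfect

end PerfectCode

section Multispread

theorem sum_comp_of_surjective_addMonoidHom {V G M : Type*} [AddGroup V] [Fintype V] [AddGroup G]
    [Fintype G] [AddCommMonoid M] {π : V →+ G} (hπ : Surjective π) (g : G → M) :
    ∑ w, g (π w) = Nat.card π.ker • ∑ v, g v := by
  classical
  have hfiber : ∀ v, #{w | π w = v} = Nat.card π.ker := fun v ↦ by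
    rw [AddMonoidHom.card_fiber_eq_of_mem_range π (hπ v) ⟨0, map_zero π⟩, ← Fintype.card_subtype,
      ← Nat.card_eq_fintype_card]
    rfl
  rw [← sum_fiberwise' univ π g, smul_sum]
  simp only [sum_const, hfiber]

theorem sum_eq_add_sum_projectivization {F V M : Type*} [Field F] [Fintype F] [DecidableEq F]
    [AddCommGroup V] [Module F V] [Fintype V] [Fintype (ℙ F V)] [AddCommMonoid M] (f : V → M) :
    ∑ w, f w = f 0 + ∑ P : ℙ F V, ∑ a ∈ univ.erase (0 : F), f (a • P.rep) := by
  classical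
  rw [← add_sum_erase univ f (mem_univ 0), sum_sigma']
  congr 1
  symm
  refine sum_bij (fun z _ ↦ z.2 • z.1.rep) ?_ ?_ ?_ fun _ _ ↦ rfl
  · rintro ⟨P, a⟩ ha
    simpa [P.rep_nonzero] using ha
  · rintro ⟨P, a⟩ ha ⟨Q, b⟩ - (hab : a • P.rep = b • Q.rep)
    have ha : a ≠ 0 := by simpa using ha
    obtain rfl : P = Q := by
      rw [← P.mk_rep, ← Q.mk_rep, Projectivization.mk_eq_mk_iff']
      exact ⟨a⁻¹ * b, by rw [mul_smul, ← hab, inv_smul_smul₀ ha]⟩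
    rw [smul_left_injective F P.rep_nonzero hab]
  · intro w hw
    have hw : w ≠ 0 := by simpa using hw
    obtain ⟨a, ha⟩ := Projectivization.exists_smul_eq_mk_rep F w hw
    refine ⟨⟨Projectivization.mk F w hw, (a⁻¹ : Fˣ)⟩, by simp, ?_⟩
    simp only [← ha, ← Units.smul_def, inv_smul_smul]

variable {ι κ F G : Type*} [Fintype ι] [Fintype κ] [AddCommGroup F] [Fintype F] [DecidableEq F]
  [AddCommGroup G] [DecidableEq G]

/-- A multispread: a family of homomorphisms `h i : F →+ G` such that the images of the nonzero
elements of `F`, together with one additional `0`, cover every element of `G` exactly `ν` times.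
A subspace of the spread is encoded by a parametrization, which need not be injective. -/
def IsMultispread (h : ι → F →+ G) (ν : ℕ) : Prop :=
  ∀ v : G, (if v = 0 then 1 else 0) + ∑ i, #{a ∈ univ.erase 0 | h i a = v} = ν

theorem isMultispread_iff_sum_comp [Fintype G] {h : ι → F →+ G} {ν : ℕ} :
    IsMultispread h ν ↔ ∀ g : G → ℕ,
      g 0 + ∑ i, ∑ a ∈ univ.erase 0, g (h i a) = ν * ∑ v, g v := by
  refine ⟨fun H g ↦ ?_, fun H v ↦ ?_⟩
  · calc g 0 + ∑ i, ∑ a ∈ univ.erase 0, g (h i a)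
      _ = ∑ v, (if v = 0 then 1 else 0) * g v +
          ∑ i, ∑ v, #{a ∈ univ.erase 0 | h i a = v} * g v := by
        simp [← sum_fiberwise' (univ.erase 0) (h _) g]
      _ = ∑ v, ((if v = 0 then 1 else 0) + ∑ i, #{a ∈ univ.erase 0 | h i a = v}) * g v := by
        rw [sum_comm, ← sum_add_distrib]
        simp only [add_mul, sum_mul]
      _ = ν * ∑ v, g v := by rw [mul_sum, sum_congr rfl fun v _ ↦ by rw [H v]]
  · have := H fun w ↦ if w = v then 1 else 0
    simpa [eq_comm (a := v)] using this

namespace IsMultispread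

variable {h : ι → F →+ G} {ν : ℕ}

theorem comp_equiv (H : IsMultispread h ν) (e : κ ≃ ι) : IsMultispread (fun k ↦ h (e k)) ν :=
  fun v ↦ by rw [e.sum_comp fun i ↦ #{a ∈ univ.erase 0 | h i a = v}, H v]

theorem sumElim (H : IsMultispread h ν) {k : κ → F →+ G} {b : ℕ}
    (hk : ∀ v, ∑ i, #{a ∈ univ.erase 0 | k i a = v} = b) :
    IsMultispread (Sum.elim h k) (ν + b) := fun v ↦ by
  rw [Fintype.sum_sum_type, ← add_assoc]
  exact congrArg₂ _ (H v) (hk v)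

variable [Fintype G]

theorem mul_card_eq (H : IsMultispread h ν) :
    ν * Fintype.card G = (Fintype.card F - 1) * Fintype.card ι + 1 := by
  have hcard := isMultispread_iff_sum_comp.1 H fun _ ↦ 1
  simp only [sum_const, card_erase_of_mem (mem_univ _), card_univ, smul_eq_mul, mul_one] at hcard
  rw [← hcard, mul_comm, add_comm]

theorem sum_hammingUnitBall [DecidableEq ι] (H : IsMultispread h ν) (g : G → ℕ) (x : ι → F) :
    ∑ y ∈ hammingUnitBall x, g (∑ i, h i (y i)) = ν * ∑ v, g v := by
  set s := ∑ i, h i (x i) with hs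
  have hupdate : ∀ i a, ∑ j, h j (update x i a j) = s + h i (a - x i) := fun i a ↦ by
    rw [hs, ← sub_eq_iff_eq_add', ← sum_sub_distrib, sum_eq_single i]
    · simp
    · intro j _ hj
      simp [hj]
    · simp
  have hshift : ∀ i, ∑ a ∈ univ.erase (x i), g (s + h i (a - x i)) =
      ∑ a ∈ univ.erase 0, g (s + h i a) := fun i ↦
    sum_equiv (Equiv.subRight (x i)) (by simp [sub_eq_zero]) fun _ _ ↦ rfl
  have hspread := isMultispread_iff_sum_comp.1 H fun v ↦ g (s + v)
  have htranslate : ∑ v, g (s + v) = ∑ v, g v := Equiv.sum_comp (Equiv.addLeft s) g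
  rw [add_zero, htranslate] at hspread
  simp only [_root_.sum_hammingUnitBall, hupdate, hshift, ← hs, hspread]

theorem isMultifoldPerfect (H : IsMultispread h ν) {S : Finset G} (hpos : 0 < ν * #S)
    (hlt : #S < Fintype.card G) :
    IsMultifoldPerfect (ν * #S) {y : ι → F | ∑ i, h i (y i) ∈ S} := by
  classical
  refine isMultifoldPerfect_of_card_ball hpos ?_ fun x ↦ ?_
  · rw [← H.mul_card_eq]
    exact Nat.mul_lt_mul_of_pos_left hlt (Nat.pos_of_mul_pos_right hpos)
  · rw [card_mem_hammingDist_le_one, card_filter]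
    simpa using H.sum_hammingUnitBall (fun v ↦ if v ∈ S then 1 else 0) x

end IsMultispread

theorem isMultispread_projectivization {F V G : Type*} [Field F] [Fintype F] [DecidableEq F]
    [AddCommGroup V] [Module F V] [Finite V] [Fintype (ℙ F V)] [AddCommGroup G] [Finite G]
    [DecidableEq G] {π : V →+ G} (hπ : Surjective π) :
    IsMultispread (fun P : ℙ F V ↦ π.comp (LinearMap.toSpanSingleton F V P.rep).toAddMonoidHom)
      (Nat.card π.ker) := by
  let _ := Fintype.ofFinite V
  let _ := Fintype.ofFinite G
  refine isMultispread_iff_sum_comp.2 fun g ↦ ?_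
  rw [← smul_eq_mul, ← sum_comp_of_surjective_addMonoidHom hπ g,
    sum_eq_add_sum_projectivization (F := F) (V := V), map_zero]
  rfl

theorem sum_card_filter_mul_eq {F L : Type*} [AddCommGroup F] [Fintype F] [DecidableEq F]
    [DivisionRing L] [Fintype L] [DecidableEq L] {φ : F →+ L} (hφ : Injective φ) (v : L) :
    ∑ c : L, #{a ∈ univ.erase 0 | c * φ a = v} = Fintype.card F - 1 := by
  have hunique : ∀ a ∈ univ.erase (0 : F), #{c | c * φ a = v} = 1 := fun a ha ↦ by
    have hφa : φ a ≠ 0 := (map_ne_zero_iff φ hφ).2 (ne_of_mem_erase ha)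
    simp [← eq_div_iff_mul_eq hφa, filter_eq']
  simp only [card_filter] at hunique ⊢
  rw [sum_comm, sum_congr rfl hunique]
  simp [card_erase_of_mem]

theorem exists_surjective_linearMap_of_finrank_le {K V W : Type*} [Field K] [AddCommGroup V]
    [Module K V] [Module.Finite K V] [AddCommGroup W] [Module K W] [Module.Finite K W]
    (h : finrank K W ≤ finrank K V) : ∃ f : V →ₗ[K] W, Surjective f := by
  obtain ⟨g, hg⟩ := finrank_le_iff_exists_linearMap.1 h
  obtain ⟨f, hf⟩ := g.exists_leftInverse_of_injective (LinearMap.ker_eq_bot.2 hg)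
  exact ⟨f, fun w ↦ ⟨g w, LinearMap.congr_fun hf w⟩⟩

theorem exists_isMultispread (K : Type*) {F L : Type*} [Field K] [Field F] [Fintype F]
    [DecidableEq F] [Algebra K F] [DivisionRing L] [Fintype L] [DecidableEq L] [Algebra K L]
    {A j n : ℕ} (hFL : finrank K F ≤ finrank K L) (hLA : finrank K L ≤ A * finrank K F)
    (hn : n = ∑ i ∈ range A, Fintype.card F ^ i + j * Fintype.card L) :
    ∃ (ν : ℕ) (h : Fin n → F →+ L), IsMultispread h ν := by
  let _ := Fintype.ofFinite (ℙ F (Fin A → F))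
  obtain ⟨π, hπ⟩ := exists_surjective_linearMap_of_finrank_le (K := K) (V := Fin A → F) (W := L)
    (by simpa [finrank_pi_fintype] using hLA)
  obtain ⟨φ, hφ⟩ := finrank_le_iff_exists_linearMap.1 hFL
  have H := (isMultispread_projectivization (F := F) (π := π.toAddMonoidHom) hπ).sumElim
    (k := fun c : Fin j × L ↦ (AddMonoidHom.mulLeft c.2).comp φ.toAddMonoidHom)
    (b := j * (Fintype.card F - 1)) fun v ↦ by
      rw [Fintype.sum_prod_type]
      exact (sum_congr rfl fun _ _ ↦ sum_card_filter_mul_eq (φ := φ.toAddMonoidHom) hφ v).trans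
        (by simp)
  have hcard : Fintype.card (ℙ F (Fin A → F) ⊕ Fin j × L) = n := by
    rw [hn, Fintype.card_sum, Fintype.card_prod, Fintype.card_fin, ← Nat.card_eq_fintype_card,
      Projectivization.card_of_finrank F _ (finrank_fin_fun F), Nat.card_eq_fintype_card]
  exact ⟨_, _, H.comp_equiv (Fintype.equivFinOfCardEq hcard).symm⟩

end Multispread

section Existence

theorem pred_mul_geomSum_add_one {q : ℕ} (hq : 0 < q) (A : ℕ) :
    (q - 1) * ∑ i ∈ range A, q ^ i + 1 = q ^ A := by
  obtain ⟨r, rfl⟩ := Nat.exists_eq_succ_of_ne_zero hq.ne'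
  rw [Nat.succ_sub_one, mul_comm]
  exact geom_sum_mul_add r A

theorem geomSum_pow_lt_pow {p t A M : ℕ} (hp : 1 < p) (ht : 0 < t) (hA : A * t ≤ t - 1 + M) :
    ∑ i ∈ range A, (p ^ t) ^ i < p ^ M := by
  have hle : p ^ (t - 1) ≤ p ^ t - 1 :=
    Nat.le_sub_one_of_lt (Nat.pow_lt_pow_right hp (Nat.sub_lt ht one_pos))
  refine Nat.lt_of_mul_lt_mul_left (a := p ^ t - 1) ?_
  calc (p ^ t - 1) * ∑ i ∈ range A, (p ^ t) ^ i
    _ < (p ^ t) ^ A :=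
      Nat.lt_of_succ_le (pred_mul_geomSum_add_one (pow_pos (pos_of_gt hp) t) A).le
    _ = p ^ (A * t) := by rw [← pow_mul, mul_comm]
    _ ≤ p ^ (t - 1) * p ^ M := by
      rw [← pow_add]
      exact Nat.pow_le_pow_right (pos_of_gt hp) hA
    _ ≤ (p ^ t - 1) * p ^ M := Nat.mul_le_mul_right _ hle

theorem exists_eq_geomSum_add_mul_pow {p t M n : ℕ} (hp : 1 < p) (ht : 0 < t)
    (hdvd : p ^ M ∣ (p ^ t - 1) * n + 1) :
    ∃ A j, M ≤ A * t ∧ n = ∑ i ∈ range A, (p ^ t) ^ i + j * p ^ M := by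
  obtain ⟨A, hMA, hAM⟩ : ∃ A, M ≤ A * t ∧ A * t ≤ t - 1 + M := by
    refine ⟨(t - 1 + M) / t, ?_, Nat.div_mul_le_self _ _⟩
    have := Nat.lt_div_mul_add (a := t - 1 + M) ht
    omega
  have hcop : (p ^ M).Coprime (p ^ t - 1) :=
    Nat.Coprime.coprime_dvd_left hdvd (by simp)
  have hmod : ∑ i ∈ range A, (p ^ t) ^ i ≡ n [MOD p ^ M] := by
    refine Nat.ModEq.cancel_left_of_coprime hcop (Nat.ModEq.add_right_cancel' 1 ?_)
    rw [pred_mul_geomSum_add_one (pow_pos (pos_of_gt hp) t), ← pow_mul, mul_comm t]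
    exact (Nat.modEq_zero_iff_dvd.2 (pow_dvd_pow p hMA)).trans (Nat.modEq_zero_iff_dvd.2 hdvd).symm
  refine ⟨A, n / p ^ M, hMA, ?_⟩
  calc n
    _ = n % p ^ M + n / p ^ M * p ^ M := (Nat.mod_add_div' n _).symm
    _ = ∑ i ∈ range A, (p ^ t) ^ i + n / p ^ M * p ^ M := by
      rw [← hmod, Nat.mod_eq_of_lt (geomSum_pow_lt_pow hp ht hAM)]

theorem dvd_pred_mul_add_one_of_modEq_one {q n : ℕ} (hq : 0 < q) (hn : n ≡ 1 [MOD q]) :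
    q ∣ (q - 1) * n + 1 := by
  rw [← Nat.modEq_zero_iff_dvd]
  calc (q - 1) * n + 1 ≡ (q - 1) * 1 + 1 [MOD q] := (hn.mul_left _).add_right 1
    _ = q := by omega
    _ ≡ 0 [MOD q] := by simp [Nat.ModEq]

theorem exists_eq_pow_mul_of_dvd_mul_pow {p t e N μ : ℕ} (hp : p.Prime) (htN : p ^ t ∣ N)
    (hdvd : N ∣ μ * p ^ e) (hlt : μ < N) :
    ∃ M ν s, t ≤ M ∧ N = p ^ M * ν ∧ μ = ν * s ∧ s < p ^ M := by
  obtain ⟨M, ν, hpν, rfl⟩ := Nat.exists_eq_pow_mul_and_not_dvd (Nat.ne_zero_of_lt hlt) p hp.ne_one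
  have hcop : p.Coprime ν := (hp.coprime_iff_not_dvd).2 hpν
  have htM : t ≤ M := (Nat.pow_dvd_pow_iff_le_right hp.one_lt).1
    ((hcop.pow_left t).dvd_of_dvd_mul_right htN)
  obtain ⟨s, rfl⟩ : ν ∣ μ :=
    (hcop.symm.pow_right e).dvd_of_dvd_mul_right ((Dvd.intro_left _ rfl).trans hdvd)
  rw [mul_comm _ ν] at hlt
  exact ⟨M, ν, s, htM, rfl, rfl, Nat.lt_of_mul_lt_mul_left hlt⟩

theorem fintypeCard_galoisField {p t : ℕ} [Fact p.Prime] (ht : t ≠ 0)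
    [Fintype (GaloisField p t)] : Fintype.card (GaloisField p t) = p ^ t := by
  rw [← Nat.card_eq_fintype_card, GaloisField.card p t ht]

theorem exists_isMultispread_galoisField {p t M n ν : ℕ} [Fact p.Prime] (ht : 0 < t) (htM : t ≤ M)
    [DecidableEq (GaloisField p t)] [DecidableEq (GaloisField p M)] [Fintype (GaloisField p t)]
    (hν : (p ^ t - 1) * n + 1 = p ^ M * ν) :
    ∃ h : Fin n → GaloisField p t →+ GaloisField p M, IsMultispread h ν := by
  let _ := Fintype.ofFinite (GaloisField p M)
  have hp : p.Prime := Fact.out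
  have hM : M ≠ 0 := (ht.trans_le htM).ne'
  obtain ⟨A, j, hMA, hn⟩ := exists_eq_geomSum_add_mul_pow hp.one_lt ht (Dvd.intro _ hν.symm)
  obtain ⟨ν', h, H⟩ := exists_isMultispread (ZMod p) (n := n) (j := j) (A := A)
    (F := GaloisField p t) (L := GaloisField p M)
    (by rwa [GaloisField.finrank p ht.ne', GaloisField.finrank p hM])
    (by rwa [GaloisField.finrank p ht.ne', GaloisField.finrank p hM])
    (by rwa [fintypeCard_galoisField ht.ne', fintypeCard_galoisField hM])
  have hν' := H.mul_card_eq
  rw [fintypeCard_galoisField ht.ne', fintypeCard_galoisField hM, Fintype.card_fin, hν,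
    mul_comm (p ^ M)] at hν'
  exact ⟨h, Nat.eq_of_mul_eq_mul_right (pow_pos hp.pos M) hν' ▸ H⟩

theorem exists_isMultifoldPerfect {p t n μ : ℕ} (hp : p.Prime) (ht : 0 < t) (hμ : 0 < μ)
    (hlt : μ < (p ^ t - 1) * n + 1) (hdvd : (p ^ t - 1) * n + 1 ∣ μ * (p ^ t) ^ n)
    (hn : n ≡ 1 [MOD p ^ t]) : ∃ C : Set (Fin n → Fin (p ^ t)), IsMultifoldPerfect μ C := by
  classical
  have : Fact p.Prime := ⟨hp⟩
  rw [← pow_mul] at hdvd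
  obtain ⟨M, ν, s, htM, hν, rfl, hs⟩ := exists_eq_pow_mul_of_dvd_mul_pow hp
    (dvd_pred_mul_add_one_of_modEq_one (pow_pos hp.pos t) hn) hdvd hlt
  let _ := Fintype.ofFinite (GaloisField p t)
  let _ := Fintype.ofFinite (GaloisField p M)
  obtain ⟨h, H⟩ := exists_isMultispread_galoisField ht htM hν
  rw [← fintypeCard_galoisField (ht.trans_le htM).ne'] at hs
  obtain ⟨S, -, rfl⟩ := exists_subset_card_eq (s := (univ : Finset (GaloisField p M))) hs.le
  have e := Fintype.equivFinOfCardEq (fintypeCard_galoisField (p := p) ht.ne')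
  exact ⟨_, (H.isMultifoldPerfect hμ hs).comp_equiv e.symm⟩

end Existence

/-- Characterization: for q = p^t, p prime, a μ-fold 1-perfect code in H(n,q)
    exists iff μ < (q-1)n+1, ((q-1)n+1) ∣ μ·q^n, and n ≡ 1 (mod q). -/
theorem stmt_19 (p t n μ : ℕ) (hp : p.Prime) (ht : 0 < t) (hμ : 0 < μ) :
    (∃ C : Set (Fin n → Fin (p ^ t)), C.Nonempty ∧ C ≠ Set.univ ∧
        ∀ x : Fin n → Fin (p ^ t),
          Nat.card {y : Fin n → Fin (p ^ t) // y ∈ C ∧ hammingDist x y ≤ 1} = μ)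
    ↔ (μ < (p ^ t - 1) * n + 1 ∧
       ((p ^ t - 1) * n + 1) ∣ μ * (p ^ t) ^ n ∧
       n ≡ 1 [MOD p ^ t]) := by
  constructor
  · rintro ⟨C, hne, huniv, hcard⟩
    have hC : IsMultifoldPerfect μ C := ⟨hne, huniv, hcard⟩
    refine ⟨?_, ?_, ?_⟩
    · simpa only [Fintype.card_fin] using hC.lt_card_hammingUnitBall
    · simpa only [Fintype.card_fin] using hC.card_hammingUnitBall_dvd
    · simpa only [Fintype.card_fin] using hC.card_modEq_one
  · rintro ⟨hlt, hdvd, hn⟩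
    obtain ⟨C, hC⟩ := exists_isMultifoldPerfect hp ht hμ hlt hdvd hn
    exact ⟨C, hC.nonempty, hC.ne_univ, hC.card_ball⟩
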